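/- Let G ≤ Sym(Ω) act transitively on a finite set Ω with |Ω| = n ≥ 2 and let α ∈ Ω with stabilizer G_α. Then there exists τ ∈ G such that Σ_{g ∈ G_α} move(g ∘ τ) > (n − 1) · |G_α|; that is, some coset G_α τ of the point stabilizer has average number of moved points strictly greater than n − 1. -/

import Mathlib

/-!
By Burnside's lemma a transitive group fixes exactly one point on average, whereas an intransitive
one fixes at least two. Averaging over all `τ ∈ G`, the cosets `Hτ` of an intransitive subgroup `H`
of a transitive group `G` thus fix one point on average; the coset `H` itself exceeds this average,
so some other coset lies strictly below it.
-/

open MulAction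

section Translates

variable {G ι M : Type*} [Group G] [Fintype G] [Fintype ι]

theorem sum_sum_mul_right [AddCommMonoid M] (f : G → M) (s : ι → G) :
    ∑ g, ∑ i, f (s i * g) = Fintype.card ι • ∑ g, f g := by
  rw [Finset.sum_comm]
  simp only [(Group.mulLeft_bijective _).sum_comp f, Finset.sum_const, Finset.card_univ]

theorem exists_sum_mul_right_lt [AddCommMonoid M] [LinearOrder M] [IsOrderedCancelAddMonoid M]
    {f : G → M} {s : ι → G} {c : M} (hf : ∑ g, f g = Fintype.card G • c)
    (hs : Fintype.card ι • c < ∑ i, f (s i)) :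
    ∃ g, ∑ i, f (s i * g) < Fintype.card ι • c := by
  by_contra! hle
  have hlt : ∑ _g : G, Fintype.card ι • c < ∑ g, ∑ i, f (s i * g) :=
    Finset.sum_lt_sum (fun g _ ↦ hle g) ⟨1, Finset.mem_univ 1, by simpa only [mul_one] using hs⟩
  refine hlt.ne' ?_
  calc
    ∑ g, ∑ i, f (s i * g) = Fintype.card ι • Fintype.card G • c := by rw [sum_sum_mul_right, hf]
    _ = ∑ _g : G, Fintype.card ι • c := by
      rw [Finset.sum_const, Finset.card_univ, smul_comm]

end Translates

section Burnside

variable (G Ω : Type*) [Group G] [Fintype G] [MulAction G Ω] [Finite Ω]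

theorem sum_ncard_fixedBy :
    ∑ g : G, (fixedBy Ω g).ncard = Nat.card (orbitRel.Quotient G Ω) * Fintype.card G := by
  classical
  have := Fintype.ofFinite Ω
  have burnside := sum_card_fixedBy_eq_card_orbits_mul_card_group G Ω
  simp only [← Nat.card_eq_fintype_card, Nat.card_coe_set_eq] at burnside ⊢
  exact burnside

theorem sum_ncard_fixedBy_of_isPretransitive [Nonempty Ω] [IsPretransitive G Ω] :
    ∑ g : G, (fixedBy Ω g).ncard = Fintype.card G := by
  have : Subsingleton (orbitRel.Quotient G Ω) :=
    (pretransitive_iff_subsingleton_quotient G Ω).1 inferInstance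
  rw [sum_ncard_fixedBy, Nat.card_of_subsingleton (Quotient.mk _ (Classical.arbitrary Ω)), one_mul]

variable {G Ω} in
theorem card_lt_sum_ncard_fixedBy (h : ¬ IsPretransitive G Ω) :
    Fintype.card G < ∑ g : G, (fixedBy Ω g).ncard := by
  have : Nontrivial (orbitRel.Quotient G Ω) := by
    rwa [pretransitive_iff_subsingleton_quotient, not_subsingleton_iff_nontrivial] at h
  rw [sum_ncard_fixedBy]
  exact lt_mul_of_one_lt_left Fintype.card_pos Finite.one_lt_card

end Burnside

theorem sum_ncard_add_sum_ncard_compl {ι Ω : Type*} [Fintype ι] [Finite Ω] (s : ι → Set Ω) :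
    ∑ i, (s i).ncard + ∑ i, (s i)ᶜ.ncard = Fintype.card ι * Nat.card Ω := by
  rw [← Finset.sum_add_distrib, Fintype.sum_congr _ _ fun i ↦ Set.ncard_add_ncard_compl (s i),
    Finset.sum_const, Finset.card_univ, smul_eq_mul]

theorem nonempty_of_not_isPretransitive {G Ω : Type*} [SMul G Ω]
    (h : ¬ IsPretransitive G Ω) : Nonempty Ω := by
  by_contra! hempty
  exact h ⟨fun x ↦ isEmptyElim x⟩

section Cosets

variable {G Ω : Type*} [Group G] [MulAction G Ω]

theorem exists_sum_ncard_fixedBy_mul_lt [Finite G] [Finite Ω] [IsPretransitive G Ω]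
    {H : Subgroup G} [Fintype H] (hH : ¬ IsPretransitive H Ω) :
    ∃ τ : G, ∑ h : H, (fixedBy Ω ((h : G) * τ)).ncard < Fintype.card H := by
  have := Fintype.ofFinite G
  have : Nonempty Ω := nonempty_of_not_isPretransitive hH
  have hG : ∑ g : G, (fixedBy Ω g).ncard = Fintype.card G • 1 := by
    rw [sum_ncard_fixedBy_of_isPretransitive, smul_eq_mul, mul_one]
  have hH' : Fintype.card H • 1 < ∑ h : H, (fixedBy Ω (h : G)).ncard := by
    rw [smul_eq_mul, mul_one]
    exact card_lt_sum_ncard_fixedBy hH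
  simpa only [smul_eq_mul, mul_one] using exists_sum_mul_right_lt hG hH'

theorem exists_good_coset_general [Finite G] [Finite Ω] [IsPretransitive G Ω]
    {H : Subgroup G} [Fintype H] (hH : ¬ IsPretransitive H Ω) :
    ∃ τ : G, (Nat.card Ω - 1) * Nat.card H < ∑ h : H, (fixedBy Ω ((h : G) * τ))ᶜ.ncard := by
  obtain ⟨τ, hτ⟩ := exists_sum_ncard_fixedBy_mul_lt (Ω := Ω) hH
  have hsum := sum_ncard_add_sum_ncard_compl fun h : H ↦ fixedBy Ω ((h : G) * τ)
  have : Nonempty Ω := nonempty_of_not_isPretransitive hH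
  have hcard : Fintype.card H ≤ Fintype.card H * Nat.card Ω :=
    Nat.le_mul_of_pos_right _ Nat.card_pos
  refine ⟨τ, ?_⟩
  rw [Nat.card_eq_fintype_card (α := H), Nat.sub_one_mul, mul_comm]
  omega

theorem not_isPretransitive_stabilizer [Nontrivial Ω] (α : Ω) :
    ¬ IsPretransitive (stabilizer G α) Ω := by
  intro _
  obtain ⟨β, hβ⟩ := exists_ne α
  obtain ⟨g, hg⟩ := exists_smul_eq (stabilizer G α) α β
  exact hβ (hg.symm.trans g.2)

end Cosets

/-- For a transitive group `G` on `n ≥ 2` points, some coset `G_α τ` of a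
point stabilizer has total number of moved points exceeding `(n-1) * |G_α|`. -/
theorem exists_good_coset {Ω : Type*} [Fintype Ω]
    (G : Subgroup (Equiv.Perm Ω)) (hΩ : 2 ≤ Fintype.card Ω)
    (htrans : ∀ x y : Ω, ∃ g ∈ G, g x = y) (α : Ω)
    [Fintype (MulAction.stabilizer G α)] :
    ∃ τ ∈ G,
      (Fintype.card Ω - 1) * Nat.card (MulAction.stabilizer G α) <
        ∑ g : MulAction.stabilizer G α,
          Nat.card {j : Ω | (((g : G) : Equiv.Perm Ω) * τ) j ≠ j} := by
  have : Nontrivial Ω := Fintype.one_lt_card_iff_nontrivial.1 hΩ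
  have : IsPretransitive G Ω :=
    ⟨fun x y ↦ let ⟨g, hg, hgx⟩ := htrans x y; ⟨⟨g, hg⟩, hgx⟩⟩
  obtain ⟨τ, hτ⟩ := exists_good_coset_general (not_isPretransitive_stabilizer (G := G) α)
  rw [Nat.card_eq_fintype_card (α := Ω)] at hτ
  exact ⟨τ, τ.2, hτ⟩
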